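/- arXiv:2411.16525 — 2 statements merged into one kernel-verified Lean document; each statement's English description precedes it below -/
import Mathlib

section
/- Let n ≥ 2 and a, b ∈ ℝ^n satisfy: a_i = b_i for all i ∈ [n−1]; a_n > b_n; and max_{i∈[n−1]} a_i − a_n > δ for some real δ ≥ ln n + 3. Then Boltz(b) − Boltz(a) > (a_n − b_n)(δ + a_n − b_n − ln n − 1) · e^{b_n} / ∑_{i=1}^n e^{b_i}. -/
/-- The softmax of a vector `z ∈ ℝⁿ`: `softmax(z)_i = exp(z_i) / ∑_j exp(z_j)`. -/
noncomputable def softmaxVec {n : ℕ} (z : Fin n → ℝ) : Fin n → ℝ :=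
  fun i => Real.exp (z i) / ∑ j, Real.exp (z j)

/-- The Boltzmann operator `Boltz(z) = ∑_i z_i · softmax(z)_i`. -/
noncomputable def boltz {n : ℕ} (z : Fin n → ℝ) : ℝ :=
  ∑ i, z i * softmaxVec z i

/-!
Changing the entry `a k` to `b k` alters a single summand of `∑ j, (z j - boltz a) * exp (z j)`,
which vanishes at `z = a`; this expresses `boltz b - boltz a` through `boltz a - a k`. Since
`boltz a` is the log-sum-exp of `a` minus the entropy of its softmax distribution, and entropy is
at most `log n`, we get `boltz a - a k ≥ L` for `L = δ - log n`. What remains is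
`d * (L + d) < L * (exp d - 1)` for `d = a k - b k > 0`, which holds once `L ≥ 2` by comparing
Taylor coefficients.
-/

theorem sum_negMulLog_le_log_card {ι : Type*} [Fintype ι] [Nonempty ι] {p : ι → ℝ}
    (hp : ∀ i, 0 ≤ p i) (hsum : ∑ i, p i = 1) :
    ∑ i, Real.negMulLog (p i) ≤ Real.log (Fintype.card ι) := by
  have hcard : (0 : ℝ) < Fintype.card ι := by exact_mod_cast Fintype.card_pos
  have jensen := Real.concaveOn_negMulLog.le_map_sum (t := Finset.univ)
    (w := fun _ ↦ (Fintype.card ι : ℝ)⁻¹) (p := p) (fun _ _ ↦ by positivity)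
    (by simp [hcard.ne']) (fun i _ ↦ hp i)
  simp only [smul_eq_mul, ← Finset.mul_sum, hsum, mul_one, Real.negMulLog, Real.log_inv,
    neg_mul_neg] at jensen
  exact le_of_mul_le_mul_left jensen (inv_pos.mpr hcard)

theorem mul_add_lt_mul_exp_sub_one {c x : ℝ} (hc : 2 ≤ c) (hx : 0 < x) :
    x * (c + x) < c * (Real.exp x - 1) := by
  have taylor : x + x ^ 2 / 2 < Real.exp x - 1 := by
    have cubic := Real.sum_le_exp_of_nonneg hx.le 4
    norm_num [Finset.sum_range_succ, Nat.factorial] at cubic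
    linarith [pow_pos hx 3]
  calc x * (c + x) ≤ c * (x + x ^ 2 / 2) := by
        linarith [mul_le_mul_of_nonneg_right hc (sq_nonneg x)]
    _ < c * (Real.exp x - 1) := by gcongr

theorem sum_exp_pos {ι : Type*} [Fintype ι] [Nonempty ι] (z : ι → ℝ) :
    0 < ∑ i, Real.exp (z i) := by
  positivity

theorem le_log_sum_exp {ι : Type*} [Fintype ι] (z : ι → ℝ) (i : ι) :
    z i ≤ Real.log (∑ j, Real.exp (z j)) := by
  have : Nonempty ι := ⟨i⟩
  rw [Real.le_log_iff_exp_le (sum_exp_pos z)]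
  exact Finset.single_le_sum (f := fun j ↦ Real.exp (z j)) (fun _ _ ↦ (Real.exp_pos _).le)
    (Finset.mem_univ i)

theorem softmaxVec_nonneg {n : ℕ} (z : Fin n → ℝ) (i : Fin n) : 0 ≤ softmaxVec z i := by
  unfold softmaxVec
  positivity

section Boltz

variable {n : ℕ} [NeZero n] (z : Fin n → ℝ)

theorem sum_softmaxVec : ∑ i, softmaxVec z i = 1 := by
  simp only [softmaxVec, ← Finset.sum_div, div_self (sum_exp_pos z).ne']

theorem log_softmaxVec (i : Fin n) :
    Real.log (softmaxVec z i) = z i - Real.log (∑ j, Real.exp (z j)) := by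
  rw [softmaxVec, Real.log_div (Real.exp_ne_zero _) (sum_exp_pos z).ne', Real.log_exp]

theorem boltz_eq_log_sum_exp_sub_sum_negMulLog :
    boltz z = Real.log (∑ i, Real.exp (z i)) - ∑ i, Real.negMulLog (softmaxVec z i) := by
  have summand (i : Fin n) : Real.negMulLog (softmaxVec z i) =
      softmaxVec z i * Real.log (∑ j, Real.exp (z j)) - z i * softmaxVec z i := by
    rw [Real.negMulLog, log_softmaxVec]
    ring
  simp only [summand, Finset.sum_sub_distrib, ← Finset.sum_mul, sum_softmaxVec, one_mul,
    sub_sub_cancel, boltz]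

theorem log_sum_exp_sub_log_le_boltz :
    Real.log (∑ i, Real.exp (z i)) - Real.log n ≤ boltz z := by
  have entropy_le := sum_negMulLog_le_log_card (softmaxVec_nonneg z) (sum_softmaxVec z)
  rw [Fintype.card_fin] at entropy_le
  rw [boltz_eq_log_sum_exp_sub_sum_negMulLog]
  gcongr

theorem sum_sub_mul_exp_eq_boltz_sub_mul_sum_exp (c : ℝ) :
    ∑ i, (z i - c) * Real.exp (z i) = (boltz z - c) * ∑ i, Real.exp (z i) := by
  have boltz_mul : boltz z * ∑ i, Real.exp (z i) = ∑ i, z i * Real.exp (z i) := by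
    simp only [boltz, softmaxVec, ← mul_div_assoc, ← Finset.sum_div]
    exact div_mul_cancel₀ _ (sum_exp_pos z).ne'
  simp only [sub_mul, Finset.sum_sub_distrib, ← Finset.mul_sum, boltz_mul]

end Boltz

theorem boltz_sub_boltz_eq_of_eq_off {n : ℕ} {a b : Fin n → ℝ} {k : Fin n}
    (h : ∀ j ≠ k, a j = b j) :
    boltz b - boltz a =
      ((boltz a - a k) * (Real.exp (a k - b k) - 1) - (a k - b k)) *
        (Real.exp (b k) / ∑ i, Real.exp (b i)) := by
  have : NeZero n := k.neZero
  have single : ∑ j, ((b j - boltz a) * Real.exp (b j) - (a j - boltz a) * Real.exp (a j)) =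
      (b k - boltz a) * Real.exp (b k) - (a k - boltz a) * Real.exp (a k) :=
    Fintype.sum_eq_single k fun j hj ↦ by rw [h j hj, sub_self]
  simp only [Finset.sum_sub_distrib, sum_sub_mul_exp_eq_boltz_sub_mul_sum_exp, sub_self, zero_mul,
    sub_zero] at single
  rw [← mul_div_assoc, eq_div_iff (sum_exp_pos b).ne', single, Real.exp_sub]
  field_simp
  ring

theorem boltz_sub_boltz_gt_of_lastEntry_general {n : ℕ} {δ : ℝ} {a b : Fin n → ℝ} {i k : Fin n}
    (hδ : Real.log n + 2 ≤ δ) (hsame : ∀ j ≠ k, a j = b j) (hlt : b k < a k)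
    (hgap : δ ≤ a i - a k) :
    (a k - b k) * (δ + a k - b k - Real.log n - 1) * (Real.exp (b k) / ∑ i, Real.exp (b i)) <
      boltz b - boltz a := by
  have : NeZero n := k.neZero
  have hexp : 0 < Real.exp (a k - b k) - 1 :=
    sub_pos.mpr (Real.one_lt_exp_iff.mpr (sub_pos.mpr hlt))
  have hboltz : δ - Real.log n ≤ boltz a - a k := by
    linarith [log_sum_exp_sub_log_le_boltz a, le_log_sum_exp a i]
  rw [boltz_sub_boltz_eq_of_eq_off hsame]
  refine mul_lt_mul_of_pos_right ?_ (by positivity)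
  calc (a k - b k) * (δ + a k - b k - Real.log n - 1)
      = (a k - b k) * (δ - Real.log n + (a k - b k)) - (a k - b k) := by ring
    _ < (δ - Real.log n) * (Real.exp (a k - b k) - 1) - (a k - b k) :=
        sub_lt_sub_right
          (mul_add_lt_mul_exp_sub_one (le_sub_iff_add_le'.mpr hδ) (sub_pos.mpr hlt)) _
    _ ≤ (boltz a - a k) * (Real.exp (a k - b k) - 1) - (a k - b k) := by
        gcongr

/-- suppose `a` and `b` agree in the first `n−1` entries, `a_n > b_n`, and
`max_{i∈[n−1]} a_i − a_n > δ` with `δ ≥ ln n + 3`.  Then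
`Boltz(b) − Boltz(a) > (a_n − b_n)(δ + a_n − b_n − ln n − 1) · e^{b_n} / ∑_i e^{b_i}`. -/
theorem boltz_sub_boltz_gt_of_lastEntry {n : ℕ} (hn : 2 ≤ n) (δ : ℝ)
    (hδ : Real.log n + 3 ≤ δ) (a b : Fin n → ℝ)
    (hsame : ∀ i : Fin n, (i : ℕ) < n - 1 → a i = b i)
    (hlast : a ⟨n - 1, by omega⟩ > b ⟨n - 1, by omega⟩)
    (hgap : ∃ i : Fin n, (i : ℕ) < n - 1 ∧ (∀ j : Fin n, (j : ℕ) < n - 1 → a j ≤ a i) ∧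
      a i - a ⟨n - 1, by omega⟩ > δ) :
    boltz b - boltz a >
      (a ⟨n - 1, by omega⟩ - b ⟨n - 1, by omega⟩) *
        (δ + a ⟨n - 1, by omega⟩ - b ⟨n - 1, by omega⟩ - Real.log n - 1) *
        (Real.exp (b ⟨n - 1, by omega⟩) / ∑ i, Real.exp (b i)) := by
  obtain ⟨i, -, -, hi⟩ := hgap
  refine boltz_sub_boltz_gt_of_lastEntry_general (by linarith) (fun j hj ↦ hsame j ?_) hlast hi.le
  grind
end

section
/- Let 1 ≤ α < ∞, ε > 0, C > 0 and integers d, L ≥ 1. There exist an integer L_p ≥ 1 and a transformer τ ∈ 𝒯_A^{1,1,4} on sequences of length L_p+L (a composition of finitely many width-4 feed-forward layers, one single-head hidden-size-1 self-attention layer with residual connection, and finitely many width-4 feed-forward layers, applied after adding the positional encoding E with E_{i,j} = j−1) such that for every C-Lipschitz function f: [0,1]^{d×L} → [0,1]^{d×L} there exists a prompt P ∈ ℝ^{d×L_p} with d_α(τ([P, ·])_{:,L_p:}, f) ≤ ε. -/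
/-- Columnwise softmax of a vector `a ∈ ℝ^L`. -/
noncomputable def smax {L : ℕ} (a : Fin L → ℝ) : Fin L → ℝ :=
  fun i => Real.exp (a i) / ∑ j, Real.exp (a j)

/-- Matrix–vector product for matrices viewed as `Fin a → Fin b → ℝ`. -/
def mvec {a b : ℕ} (W : Fin a → Fin b → ℝ) (v : Fin b → ℝ) : Fin a → ℝ :=
  fun i => ∑ j, W i j * v j

/-- The `k`-th column of a `d × n` array. -/
def column {d n : ℕ} (Z : Fin d → Fin n → ℝ) (k : Fin n) : Fin d → ℝ :=
  fun i => Z i k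

/-- Single-head self-attention with residual connection:
`f^{SA}(Z)_{:,k} = Z_{:,k} + W_O (W_V Z) softmax[(W_K Z)ᵀ (W_Q Z_{:,k})]`. -/
noncomputable def saLayer {d s n : ℕ} (WO : Fin d → Fin s → ℝ)
    (WV WK WQ : Fin s → Fin d → ℝ) (Z : Fin d → Fin n → ℝ) : Fin d → Fin n → ℝ :=
  fun i k => Z i k +
    mvec WO (fun t => ∑ l,
      mvec WV (column Z l) t *
        smax (fun l' => ∑ t', mvec WK (column Z l') t' * mvec WQ (column Z k) t') l) i

/-- Tokenwise feed-forward layer with residual connection: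
`f^{FF}(Z)_{:,k} = Z_{:,k} + W^{(2)} φ(W^{(1)} Z_{:,k} + b^{(1)}) + b^{(2)}`. -/
noncomputable def ffLayer {d n r : ℕ} (φ : ℝ → ℝ) (W1 : Fin r → Fin d → ℝ)
    (W2 : Fin d → Fin r → ℝ) (b1 : Fin r → ℝ) (b2 : Fin d → ℝ)
    (Z : Fin d → Fin n → ℝ) : Fin d → Fin n → ℝ :=
  fun i k => Z i k + mvec W2 (fun j => φ (mvec W1 (column Z k) j + b1 j)) i + b2 i

/-- A piecewise-linear activation with at most three pieces, at least one constant. -/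
def PL3 (φ : ℝ → ℝ) : Prop :=
  ∃ t₁ t₂ a₁ c₁ a₂ c₂ a₃ c₃ : ℝ, t₁ ≤ t₂ ∧ (a₁ = 0 ∨ a₂ = 0 ∨ a₃ = 0) ∧
    (∀ x, x < t₁ → φ x = a₁ * x + c₁) ∧
    (∀ x, t₁ ≤ x → x < t₂ → φ x = a₂ * x + c₂) ∧
    (∀ x, t₂ ≤ x → φ x = a₃ * x + c₃)

/-- A width-4 feed-forward layer with admissible piecewise-linear activation. -/
def IsFF4 {d n : ℕ} (f : (Fin d → Fin n → ℝ) → Fin d → Fin n → ℝ) : Prop :=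
  ∃ (φ : ℝ → ℝ) (W1 : Fin 4 → Fin d → ℝ) (W2 : Fin d → Fin 4 → ℝ)
    (b1 : Fin 4 → ℝ) (b2 : Fin d → ℝ),
      PL3 φ ∧ f = ffLayer φ W1 W2 b1 b2

/-- A single-head hidden-size-1 self-attention layer. -/
def IsSA1 {d n : ℕ} (f : (Fin d → Fin n → ℝ) → Fin d → Fin n → ℝ) : Prop :=
  ∃ (WO : Fin d → Fin 1 → ℝ) (WV WK WQ : Fin 1 → Fin d → ℝ), f = saLayer WO WV WK WQ

/-- Adding the positional encoding `E` with `E_{i,j} = j − 1` (0-indexed: `E_{i,j} = j`). -/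
def addPE {d n : ℕ} (Z : Fin d → Fin n → ℝ) : Fin d → Fin n → ℝ :=
  fun i j => Z i j + (j : ℝ)

/-- Composition of a list of layers. -/
def composeList {β : Type*} (l : List (β → β)) : β → β :=
  l.foldr (· ∘ ·) id

/-- The transformer class `𝒯_A^{1,1,4}`: finitely many width-4 feed-forward layers, one
single-head hidden-size-1 self-attention layer, finitely many width-4 feed-forward
layers, applied after adding the positional encoding. -/
def InTA {d n : ℕ} (τ : (Fin d → Fin n → ℝ) → Fin d → Fin n → ℝ) : Prop :=
  ∃ (fs gs : List ((Fin d → Fin n → ℝ) → Fin d → Fin n → ℝ))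
    (sa : (Fin d → Fin n → ℝ) → Fin d → Fin n → ℝ),
      (∀ f ∈ fs, IsFF4 f) ∧ (∀ g ∈ gs, IsFF4 g) ∧ IsSA1 sa ∧
      τ = fun Z => composeList fs (sa (composeList gs (addPE Z)))

/-- The unit cube `[0,1]^{d×m}`. -/
def cube (d m : ℕ) : Set (Fin d → Fin m → ℝ) :=
  {X | ∀ i j, X i j ∈ Set.Icc (0 : ℝ) 1}

/-- Membership in the grid `G_{δ,m} = {0, δ, 2δ, …, 1−δ}^{d×m}`. -/
def inGrid {d m : ℕ} (δ : ℝ) (M : Fin d → Fin m → ℝ) : Prop :=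
  ∀ i j, ∃ k : ℕ, M i j = (k : ℝ) * δ ∧ (k : ℝ) * δ ≤ 1 - δ

/-- Column concatenation `[P, X]` of `P ∈ ℝ^{d×L_p}` and `X ∈ ℝ^{d×L}`. -/
def concat {d Lp L : ℕ} (P : Fin d → Fin Lp → ℝ) (X : Fin d → Fin L → ℝ) :
    Fin d → Fin (Lp + L) → ℝ :=
  fun i j =>
    if h : (j : ℕ) < Lp then P i ⟨j, h⟩
    else X i ⟨(j : ℕ) - Lp, by have := j.isLt; omega⟩

/-- The last `L` columns `M_{:,L_p:}` of `M ∈ ℝ^{d×(L_p+L)}`. -/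
def lastCols {d : ℕ} (Lp L : ℕ) (M : Fin d → Fin (Lp + L) → ℝ) :
    Fin d → Fin L → ℝ :=
  fun i j => M i ⟨Lp + (j : ℕ), by have := j.isLt; omega⟩


open MeasureTheory

/-- The entrywise `ℓ_α` norm of a `d × m` array: `(∑_{i,j} |M_{ij}|^α)^{1/α}`. -/
noncomputable def anorm {d m : ℕ} (α : ℝ) (M : Fin d → Fin m → ℝ) : ℝ :=
  (∑ i, ∑ j, |M i j| ^ α) ^ (1 / α)

/-!
On the half-open cube, which is almost all of the cube, feed-forward layers can round every entry
down to a grid, so that only finitely many inputs remain to be told apart; there the integer part of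
an encoded entry is its column index, so that the columns of one input are distinct. Two step units
compute the indicator of a hyperplane, and a stack of such layers is an arbitrary lookup table on
finitely many tokens. A first lookup replaces the `i`-th possible token by `2 ^ i`. Uniform
attention then adds to every token a large multiple of the sum of these powers, and the binary
digits of that sum list the tokens present: each token now knows the whole input, and a second
lookup can output anything.

An equicontinuous family is, up to `ε`, a finite list of tables on the grid. A prompt consisting of
one negative token selects a table, and `τ` looks up the pair (prompt, rounded input).
-/

section Lookup

lemma exists_dual_ne_zero_injOn {K V : Type*} [Field K] [Infinite K] [AddCommGroup V] [Module K V]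
    [Nontrivial V] {S : Set V} (hS : S.Finite) :
    ∃ f : Module.Dual K V, f ≠ 0 ∧ Set.InjOn f S := by
  obtain ⟨w, hw⟩ := exists_ne (0 : V)
  have hfin : {v ∈ insert w (Set.image2 (· - ·) S S) | v ≠ 0}.Finite :=
    ((hS.image2 _ hS).insert w).subset (Set.sep_subset _ _)
  have := hfin.to_subtype
  obtain ⟨f, hf⟩ := Module.exists_dual_forall_apply_ne_zero (K := K)
    (Subtype.val : {v ∈ insert w (Set.image2 (· - ·) S S) | v ≠ 0} → V) fun v => v.2.2
  refine ⟨f, fun h => hf ⟨w, Set.mem_insert _ _, hw⟩ (by simp [h]), fun a ha b hb hab => ?_⟩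
  by_contra hne
  refine hf ⟨a - b, Set.mem_insert_of_mem _ ⟨a, ha, b, hb, rfl⟩, sub_ne_zero.2 hne⟩ ?_
  rw [map_sub, hab, sub_self]

lemma composeList_append {β : Type*} (l₁ l₂ : List (β → β)) :
    composeList (l₁ ++ l₂) = composeList l₁ ∘ composeList l₂ := by
  induction l₁ with
  | nil => rfl
  | cons f l ih => exact congrArg (f ∘ ·) ih

lemma pl3_heaviside : PL3 fun x => if 0 ≤ x then 1 else 0 :=
  ⟨0, 0, 0, 0, 0, 0, 0, 1, le_rfl, by simp, fun x hx => by simp [hx.not_ge],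
    fun x h h' => absurd h h'.not_ge, fun x hx => by simp [hx]⟩

lemma pl3_collapse {a b : ℝ} (hab : a ≤ b) : PL3 fun x => if a ≤ x ∧ x < b then a - x else 0 :=
  ⟨a, b, 0, 0, -1, a, 0, 0, hab, by simp, fun x hx => by simp [hx.not_ge],
    fun x h h' => by simp [h, h', sub_eq_neg_add], fun x hx => by simp [hx.not_gt]⟩

/-- The token map `F` is computed, on every column of a sequence of `n` tokens, by a finite stack
of width-4 feed-forward layers. -/
def FFRealizable {d : ℕ} (n : ℕ) (F : (Fin d → ℝ) → Fin d → ℝ) : Prop :=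
  ∃ gs : List ((Fin d → Fin n → ℝ) → Fin d → Fin n → ℝ),
    (∀ g ∈ gs, IsFF4 g) ∧ ∀ Z k, column (composeList gs Z) k = F (column Z k)

/-- Rounds `x` down to a multiple of `1 / N` when `0 ≤ x < K / N`, and fixes it otherwise. Raising
`K` by one costs one feed-forward layer per coordinate, which is why the range is bounded. -/
noncomputable def roundDown (N K : ℕ) (x : ℝ) : ℝ :=
  if 0 ≤ x ∧ x < K / N then (⌊N * x⌋₊ : ℝ) / N else x

lemma roundDown_zero (N : ℕ) (x : ℝ) : roundDown N 0 x = x :=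
  if_neg fun h => by simpa using h.1.trans_lt h.2

lemma roundDown_of_neg {N K : ℕ} {x : ℝ} (hx : x < 0) : roundDown N K x = x :=
  if_neg fun h => hx.not_ge h.1

lemma roundDown_succ {N : ℕ} (hN : 0 < N) (K : ℕ) (x : ℝ) :
    roundDown N (K + 1) x =
      if (K : ℝ) / N ≤ roundDown N K x ∧ roundDown N K x < (K + 1 : ℝ) / N
      then (K : ℝ) / N else roundDown N K x := by
  have hN' : (0 : ℝ) < N := by exact_mod_cast hN
  have hK : (K : ℝ) / N < (K + 1 : ℝ) / N := by gcongr; linarith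
  have hK0 : 0 ≤ (K : ℝ) / N := by positivity
  by_cases hx : 0 ≤ x ∧ x < K / N
  · have hrw : roundDown N K x = (⌊N * x⌋₊ : ℝ) / N := if_pos hx
    have hle : (⌊N * x⌋₊ : ℝ) / N ≤ x := by
      rw [div_le_iff₀' hN']
      exact Nat.floor_le (mul_nonneg hN'.le hx.1)
    rw [hrw, if_neg fun h => (hle.trans_lt hx.2).not_ge h.1]
    exact if_pos ⟨hx.1, by push_cast; exact hx.2.trans hK⟩
  · rw [show roundDown N K x = x from if_neg hx, roundDown, Nat.cast_add_one]
    by_cases hx' : (K : ℝ) / N ≤ x ∧ x < (K + 1 : ℝ) / N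
    · have hfloor : ⌊N * x⌋₊ = K := by
        rw [Nat.floor_eq_iff (mul_nonneg hN'.le (hK0.trans hx'.1))]
        exact ⟨(div_le_iff₀' hN').1 hx'.1, (lt_div_iff₀' hN').1 hx'.2⟩
      rw [if_pos hx', if_pos ⟨hK0.trans hx'.1, hx'.2⟩, hfloor]
    · rw [if_neg hx', if_neg fun h => hx' ⟨not_lt.1 fun hlt => hx ⟨h.1, hlt⟩, h.2⟩]

lemma roundDown_add_natCast {N K j : ℕ} (hN : 0 < N) (hj : j < K) {x : ℝ}
    (hx : x ∈ Set.Ico (0 : ℝ) 1) :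
    roundDown N (N * K) (x + j) = (⌊N * x⌋₊ : ℝ) / N + j := by
  have hN' : (0 : ℝ) < N := by exact_mod_cast hN
  have hj' : (j : ℝ) + 1 ≤ K := by exact_mod_cast hj
  have hx0 : 0 ≤ x := hx.1
  have hfloor : ⌊(N : ℝ) * (x + j)⌋₊ = ⌊N * x⌋₊ + N * j := by
    rw [mul_add, ← Nat.cast_mul, Nat.floor_add_natCast (by positivity)]
  have hlt : x + j < (N * K : ℕ) / (N : ℝ) := by
    rw [Nat.cast_mul, mul_div_cancel_left₀ _ hN'.ne']
    linarith [hx.2]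
  rw [roundDown, if_pos ⟨by positivity, hlt⟩, hfloor]
  push_cast
  field_simp

namespace FFRealizable

variable {d n : ℕ}

protected lemma id : FFRealizable n (id : (Fin d → ℝ) → Fin d → ℝ) :=
  ⟨[], by simp, fun _ _ => rfl⟩

lemma comp {F G : (Fin d → ℝ) → Fin d → ℝ} (hF : FFRealizable n F) (hG : FFRealizable n G) :
    FFRealizable n (F ∘ G) := by
  obtain ⟨fs, hfs, hF⟩ := hF
  obtain ⟨gs, hgs, hG⟩ := hG
  refine ⟨fs ++ gs, List.forall_mem_append.2 ⟨hfs, hgs⟩, fun Z k => ?_⟩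
  rw [composeList_append, Function.comp_apply, hF, hG, Function.comp_apply]

lemma of_layer {φ : ℝ → ℝ} (hφ : PL3 φ) (W1 : Fin 4 → Fin d → ℝ) (W2 : Fin d → Fin 4 → ℝ)
    (b1 : Fin 4 → ℝ) (b2 : Fin d → ℝ) :
    FFRealizable n fun z i => z i + mvec W2 (fun j => φ (mvec W1 z j + b1 j)) i + b2 i :=
  ⟨[ffLayer φ W1 W2 b1 b2], List.forall_mem_singleton.2 ⟨φ, W1, W2, b1, b2, hφ, rfl⟩,
    fun _ _ => rfl⟩

lemma add_const (w : Fin d → ℝ) : FFRealizable n (· + w) := by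
  convert of_layer (n := n) pl3_heaviside 0 0 0 w using 1
  ext z i
  simp [mvec]

lemma add_indicator (f : Module.Dual ℝ (Fin d → ℝ)) (t : ℝ) (v : Fin d → ℝ) :
    FFRealizable n fun z => z + if f z = t then v else 0 := by
  obtain ⟨u, rfl⟩ := (dotProductEquiv ℝ (Fin d)).surjective f
  -- The hidden units compute `1_{u·z ≥ t}` and `1_{u·z ≤ t}`, whose sum exceeds `1_{u·z = t}` by 1.
  convert of_layer (n := n) pl3_heaviside ![u, -u, 0, 0] (fun i => ![v i, v i, 0, 0]) ![-t, t, 0, 0]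
    (-v) using 1
  ext z i
  have hu : ∑ j, u j * z j = u ⬝ᵥ z := rfl
  rcases lt_trichotomy (u ⬝ᵥ z) t with h | h | h
  · simp [mvec, Fin.sum_univ_four, hu, h.ne, h.le, h.not_ge]
  · simp [mvec, Fin.sum_univ_four, hu, h, add_assoc]
  · simp [mvec, Fin.sum_univ_four, hu, h.ne', h.le, h.not_ge]

lemma update_collapse (i₀ : Fin d) {a b : ℝ} (hab : a ≤ b) :
    FFRealizable n
      fun z => Function.update z i₀ (if a ≤ z i₀ ∧ z i₀ < b then a else z i₀) := by
  convert of_layer (n := n) (pl3_collapse hab) ![Pi.single i₀ 1, 0, 0, 0]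
    (fun i => ![(Pi.single i₀ 1 : Fin d → ℝ) i, 0, 0, 0]) 0 0 using 1
  ext z i
  have hz : ∑ j, (Pi.single i₀ 1 : Fin d → ℝ) j * z j = z i₀ := by simp [Pi.single_apply]
  rcases eq_or_ne i i₀ with rfl | hi
  · by_cases h : a ≤ z i ∧ z i < b <;> simp [mvec, Fin.sum_univ_four, hz, h]
  · simp [mvec, Fin.sum_univ_four, hi]

lemma map_of_update {φ : ℝ → ℝ}
    (hφ : ∀ i₀ : Fin d, FFRealizable n fun z => Function.update z i₀ (φ (z i₀))) :
    FFRealizable n fun (z : Fin d → ℝ) i => φ (z i) := by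
  suffices H : ∀ A : Finset (Fin d), FFRealizable n fun z i => if i ∈ A then φ (z i) else z i by
    simpa using H Finset.univ
  intro A
  induction A using Finset.induction_on with
  | empty =>
    simp only [Finset.notMem_empty, if_false]
    exact FFRealizable.id
  | insert a A ha ih =>
    convert (hφ a).comp ih using 1
    ext z i
    rcases eq_or_ne i a with rfl | hi
    · simp [ha]
    · simp [hi]

lemma map_roundDown {N : ℕ} (hN : 0 < N) (K : ℕ) :
    FFRealizable n fun (z : Fin d → ℝ) i => roundDown N K (z i) := by
  refine map_of_update fun i₀ => ?_
  induction K with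
  | zero =>
    simp only [roundDown_zero, Function.update_eq_self]
    exact FFRealizable.id
  | succ K ih =>
    have hK : (K : ℝ) / N ≤ (K + 1 : ℝ) / N := by gcongr; linarith
    simpa [Function.comp_def, roundDown_succ hN] using (update_collapse i₀ hK).comp ih

lemma exists_eqOn_of_dual_injOn {f : Module.Dual ℝ (Fin d → ℝ)} {y : (Fin d → ℝ) → Fin d → ℝ}
    (S : Finset (Fin d → ℝ)) (hf : Set.InjOn f S) (hy : ∀ a ∈ S, f (y a) ∉ f '' S) :
    ∃ F, FFRealizable n F ∧ Set.EqOn F y S ∧ ∀ z, f z ∉ f '' S → F z = z := by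
  induction S using Finset.induction_on with
  | empty => exact ⟨id, FFRealizable.id, by simp, by simp⟩
  | insert a S ha ih =>
    simp only [Finset.coe_insert, Set.image_insert_eq, Set.mem_insert_iff, not_or,
      Finset.forall_mem_insert] at hf hy ⊢
    obtain ⟨F, hF, hFy, hFid⟩ :=
      ih (hf.mono (Set.subset_insert _ _)) fun b hb => (hy.2 b hb).2
    refine ⟨_, hF.comp (add_indicator f (f a) (y a - a)), ?_, fun z hz => ?_⟩
    · rintro b (rfl | hb)
      · simpa using hFid (y b) hy.1.2
      · have hne : f b ≠ f a := fun h =>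
          ha (hf (Set.mem_insert_of_mem _ hb) (Set.mem_insert _ _) h ▸ hb)
        simpa [hne] using hFy hb
    · simpa [hz.1] using hFid z hz.2

/-- Rows are written one at a time, so no value of `y` may be mistaken for a row still to be
written: the initial translation separates the two. -/
lemma exists_eqOn_of_finite [NeZero d] (y : (Fin d → ℝ) → Fin d → ℝ) {S : Set (Fin d → ℝ)}
    (hS : S.Finite) : ∃ F, FFRealizable n F ∧ Set.EqOn F y S := by
  lift S to Finset (Fin d → ℝ) using hS
  obtain ⟨f, hf0, hf⟩ := exists_dual_ne_zero_injOn (K := ℝ) S.finite_toSet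
  have hfin : (Set.image2 (fun a b => f (y a) - f b) S S).Finite :=
    S.finite_toSet.image2 _ S.finite_toSet
  obtain ⟨w, hw⟩ : ∃ w, f w ∉ Set.image2 (fun a b => f (y a) - f b) S S :=
    (LinearMap.surjective hf0).exists.1 hfin.exists_notMem
  obtain ⟨F, hF, hFy, -⟩ := exists_eqOn_of_dual_injOn (n := n) (f := f) (y := fun z => y (z - w))
    (S.image (· + w))
    (by
      rw [Finset.coe_image]
      rintro _ ⟨a, ha, rfl⟩ _ ⟨b, hb, rfl⟩ hab
      rw [hf ha hb (by simpa using hab)])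
    (by
      simp only [Finset.forall_mem_image, Finset.coe_image, Set.image_image, add_sub_cancel_right,
        map_add]
      rintro a ha ⟨b, hb, hab⟩
      exact hw ⟨a, ha, b, hb, by simp [← hab]⟩)
  refine ⟨_, hF.comp (add_const w), fun a ha => ?_⟩
  simpa using hFy (Finset.mem_coe.2 (Finset.mem_image_of_mem (· + w) ha))

end FFRealizable

end Lookup

section Memorization

variable {Ω ι : Type*} [Fintype ι]

lemma injective_two_pow_add_mul_sum {K : Ω → ι → ℕ} {B : ℕ} (hB : ∀ ω l, K ω l < B)
    (hK : ∀ ω, Function.Injective (K ω)) (hrange : Function.Injective fun ω => Set.range (K ω)) :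
    Function.Injective fun p : Ω × ι => 2 ^ K p.1 p.2 + 2 ^ B * ∑ l, 2 ^ K p.1 l := by
  classical
  rintro ⟨ω, k⟩ ⟨ω', k'⟩ h
  have hlt : ∀ ω l, 2 ^ K ω l < 2 ^ B := fun ω l => Nat.pow_lt_pow_right one_lt_two (hB ω l)
  have hlow : 2 ^ K ω k = 2 ^ K ω' k' := by
    have hmod := congrArg (· % 2 ^ B) h
    simp only [Nat.add_mul_mod_self_left] at hmod
    rwa [Nat.mod_eq_of_lt (hlt ω k), Nat.mod_eq_of_lt (hlt ω' k')] at hmod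
  have hhigh : ∑ l, 2 ^ K ω l = ∑ l, 2 ^ K ω' l := by
    simp only [hlow, Nat.add_left_cancel_iff] at h
    exact Nat.eq_of_mul_eq_mul_left (by positivity) h
  have hsum : ∀ ω, ∑ l, 2 ^ K ω l = ∑ a ∈ Finset.univ.image (K ω), 2 ^ a := fun ω =>
    (Finset.sum_image fun _ _ _ _ hab => hK ω hab).symm
  have himage := Finset.geomSum_injective le_rfl ((hsum ω).symm.trans (hhigh.trans (hsum ω')))
  obtain rfl : ω = ω' := hrange (by simpa [← Finset.coe_inj] using himage)
  rw [hK ω (Nat.pow_right_injective le_rfl hlow)]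

/-- An attention layer can add the second summand to the first, its residual input. -/
lemma exists_injective_add_mul_sum [Finite Ω] {V : Type*} {S : Ω → ι → V}
    (hS : ∀ ω, Function.Injective (S ω)) (hrange : Function.Injective fun ω => Set.range (S ω)) :
    ∃ (c : V → ℕ) (B : ℕ),
      Function.Injective fun p : Ω × ι => c (S p.1 p.2) + B * ∑ l, c (S p.1 l) := by
  have hfin : (⋃ ω, Set.range (S ω)).Finite := Set.finite_iUnion fun ω => Set.finite_range (S ω)
  have hmem : ∀ ω l, S ω l ∈ ⋃ ω, Set.range (S ω) := fun ω l =>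
    Set.mem_iUnion.2 ⟨ω, Set.mem_range_self l⟩
  obtain ⟨c, hc⟩ := Set.countable_iff_exists_injOn.1 hfin.countable
  obtain ⟨B, hB⟩ := (hfin.image c).bddAbove
  refine ⟨fun v => 2 ^ c v, 2 ^ (B + 1), injective_two_pow_add_mul_sum (K := fun ω l => c (S ω l))
    (fun ω l => Nat.lt_succ_of_le (hB ⟨_, hmem ω l, rfl⟩))
    (fun ω l l' h => hS ω (hc (hmem ω l) (hmem ω l') h)) fun ω ω' h => hrange ?_⟩
  refine (hc.image_eq_image_iff (Set.subset_iUnion _ ω) (Set.subset_iUnion _ ω')).1 ?_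
  simpa only [← Set.range_comp, Function.comp_def] using h

lemma exists_isSA1_add_mul_sum {d n : ℕ} (i₀ : Fin d) (M : ℝ) :
    ∃ sa : (Fin d → Fin n → ℝ) → Fin d → Fin n → ℝ,
      IsSA1 sa ∧ ∀ Z i k, sa Z i k = Z i k + M * ∑ l, Z i₀ l := by
  -- Vanishing keys make the softmax uniform; the factor `n` in `W_O` undoes the averaging.
  refine ⟨_, ⟨fun _ _ => M * n, fun _ => Pi.single i₀ 1, 0, 0, rfl⟩, fun Z i k => ?_⟩
  have hn : (n : ℝ) ≠ 0 := by exact_mod_cast k.pos.ne'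
  have hsmax : ∀ l, smax (fun _ : Fin n => (0 : ℝ)) l = (n : ℝ)⁻¹ := fun l => by simp [smax]
  have hscale : M * n * ((∑ l, Z i₀ l) * (n : ℝ)⁻¹) = M * ∑ l, Z i₀ l := by field_simp
  simpa [saLayer, mvec, hsmax, column, Pi.single_apply, ← Finset.sum_mul] using hscale

theorem exists_inTA_eq_of_column_eq [Finite Ω] {d n : ℕ} [NeZero d]
    {G : (Fin d → ℝ) → Fin d → ℝ} (hG : FFRealizable n G) {Z : Ω → Fin d → Fin n → ℝ}
    (hZ : ∀ ω, Function.Injective (column (Z ω)))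
    (hrange : Function.Injective fun ω => Set.range (column (Z ω)))
    (Y : Ω → Fin d → Fin n → ℝ) :
    ∃ τ, InTA τ ∧ ∀ X ω, (∀ k, G (column (addPE X) k) = column (Z ω) k) → τ X = Y ω := by
  obtain ⟨c, B, hcode⟩ := exists_injective_add_mul_sum hZ hrange
  let code : Ω × Fin n → Fin d → ℝ := fun p _ =>
    ((c (column (Z p.1) p.2) + B * ∑ l, c (column (Z p.1) l) : ℕ) : ℝ)
  have hcode' : Function.Injective code := fun p q h => hcode (Nat.cast_injective (congrFun h 0))
  obtain ⟨F₁, hF₁, hF₁c⟩ := FFRealizable.exists_eqOn_of_finite (n := n) (fun v _ => (c v : ℝ))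
    (Set.finite_range fun p : Ω × Fin n => column (Z p.1) p.2)
  obtain ⟨F₂, hF₂, hF₂Y⟩ := FFRealizable.exists_eqOn_of_finite (n := n)
    (Function.extend code (fun p => column (Y p.1) p.2) 0) (Set.finite_range code)
  obtain ⟨sa, hsa, hsa_apply⟩ := exists_isSA1_add_mul_sum (n := n) (0 : Fin d) (B : ℝ)
  obtain ⟨gs, hgs, hgs_apply⟩ := hF₁.comp hG
  obtain ⟨fs, hfs, hfs_apply⟩ := hF₂
  refine ⟨_, ⟨fs, gs, sa, hfs, hgs, hsa, rfl⟩, fun X ω hX => ?_⟩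
  have hpre : ∀ i k, composeList gs (addPE X) i k = c (column (Z ω) k) := fun i k => by
    have := hgs_apply (addPE X) k
    rw [Function.comp_apply, hX, hF₁c ⟨(ω, k), rfl⟩] at this
    exact congrFun this i
  have hcontext : ∀ k, column (sa (composeList gs (addPE X))) k = code (ω, k) := fun k => by
    ext i
    simp [column, code, hsa_apply, hpre]
  have hcolumn : ∀ k, column (composeList fs (sa (composeList gs (addPE X)))) k = column (Y ω) k :=
    fun k => by rw [hfs_apply, hcontext, hF₂Y ⟨(ω, k), rfl⟩, hcode'.extend_apply]
  ext i k
  exact congrFun (hcolumn k) i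

end Memorization

section Cube

variable {d m : ℕ}

/-- The half-open cube `[0,1)^{d×m}`, on which adding the positional encoding makes the
columns pairwise distinct. -/
def halfOpenCube (d m : ℕ) : Set (Fin d → Fin m → ℝ) :=
  {X | ∀ i j, X i j ∈ Set.Ico (0 : ℝ) 1}

lemma halfOpenCube_subset_cube : halfOpenCube d m ⊆ cube d m :=
  fun _ hX i j => Set.Ico_subset_Icc_self (hX i j)

lemma cube_eq_Icc : cube d m = Set.Icc 0 1 := by
  ext X
  simp [cube, Pi.le_def, forall_and]

lemma volume_cube : volume (cube d m) = 1 := by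
  rw [cube_eq_Icc, ← Set.pi_univ_Icc, volume_pi_pi]
  simp [Real.volume_Icc_pi]

lemma halfOpenCube_ae_eq_cube : halfOpenCube d m =ᵐ[volume] cube d m := by
  have hpi : halfOpenCube d m =
      Set.univ.pi fun _ => Set.univ.pi fun _ => Set.Ico (0 : ℝ) 1 := by
    ext X
    simp [halfOpenCube]
  rw [hpi, cube_eq_Icc, ← Set.pi_univ_Icc]
  exact Measure.ae_eq_set_pi fun _ _ => Measure.univ_pi_Ico_ae_eq_Icc

lemma rpow_setIntegral_rpow_le {X : Type*} [MeasurableSpace X] {μ : Measure X} {s : Set X}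
    {h : X → ℝ} {α δ : ℝ} (hμ : μ s = 1) (hα : 0 < α) (hδ : 0 ≤ δ) (h0 : ∀ x ∈ s, 0 ≤ h x)
    (hle : ∀ x ∈ s, h x ≤ δ) : (∫ x in s, h x ^ α ∂μ) ^ (1 / α) ≤ δ := by
  have hbound : |∫ x in s, h x ^ α ∂μ| ≤ δ ^ α := by
    simpa [Measure.real, hμ] using norm_setIntegral_le_of_norm_le_const
      (hμ.trans_lt ENNReal.one_lt_top) fun x hx =>
        (Real.norm_of_nonneg (Real.rpow_nonneg (h0 x hx) α)).trans_le
          (Real.rpow_le_rpow (h0 x hx) (hle x hx) hα.le)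
  calc (∫ x in s, h x ^ α ∂μ) ^ (1 / α) ≤ |(∫ x in s, h x ^ α ∂μ) ^ (1 / α)| := le_abs_self _
    _ ≤ |∫ x in s, h x ^ α ∂μ| ^ (1 / α) := Real.abs_rpow_le_abs_rpow _ _
    _ ≤ (δ ^ α) ^ (1 / α) := by gcongr
    _ = δ := by rw [one_div, Real.rpow_rpow_inv hδ hα.ne']

end Cube

section EntrywiseNorm

variable {d m : ℕ} {α : ℝ}

lemma anorm_nonneg (M : Fin d → Fin m → ℝ) : 0 ≤ anorm α M := by
  unfold anorm
  positivity

lemma norm_le_anorm (hα : 0 < α) (M : Fin d → Fin m → ℝ) : ‖M‖ ≤ anorm α M := by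
  refine (pi_norm_le_iff_of_nonneg (anorm_nonneg M)).2 fun i =>
    (pi_norm_le_iff_of_nonneg (anorm_nonneg M)).2 fun j => ?_
  have hentry : |M i j| ^ α ≤ ∑ i, ∑ j, |M i j| ^ α :=
    (Finset.single_le_sum (f := fun j => |M i j| ^ α) (fun j _ => by positivity)
      (Finset.mem_univ j)).trans
    (Finset.single_le_sum (f := fun i => ∑ j, |M i j| ^ α) (fun i _ => by positivity)
      (Finset.mem_univ i))
  rw [Real.norm_eq_abs, anorm, one_div]
  exact (Real.le_rpow_inv_iff_of_pos (abs_nonneg _) (by positivity) hα).2 hentry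

lemma anorm_le_mul_norm (hα : 0 < α) (M : Fin d → Fin m → ℝ) :
    anorm α M ≤ (d * m : ℝ) ^ (1 / α) * ‖M‖ := by
  have hentry : ∀ i j, |M i j| ≤ ‖M‖ := fun i j =>
    (norm_le_pi_norm (M i) j).trans (norm_le_pi_norm M i)
  calc anorm α M ≤ (∑ _i : Fin d, ∑ _j : Fin m, ‖M‖ ^ α) ^ (1 / α) := by
        unfold anorm
        gcongr with i _ j _
        exact hentry i j
    _ = (d * m * ‖M‖ ^ α) ^ (1 / α) := by simp [mul_assoc]
    _ = (d * m : ℝ) ^ (1 / α) * ‖M‖ := by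
        rw [Real.mul_rpow (by positivity) (by positivity), one_div,
          Real.rpow_rpow_inv (norm_nonneg _) hα.ne']

lemma uniformEquicontinuousOn_of_anorm_sub_le {C : ℝ} {S : Set (Fin d → Fin m → ℝ)} {d' m' : ℕ}
    {H : Set ((Fin d → Fin m → ℝ) → Fin d' → Fin m' → ℝ)} (hα : 0 < α) (hC : 0 ≤ C)
    (hH : ∀ f ∈ H, ∀ X ∈ S, ∀ Y ∈ S, anorm α (f X - f Y) ≤ C * anorm α (X - Y)) :
    H.UniformEquicontinuousOn S := by
  refine LipschitzOnWith.uniformEquicontinuousOn _ (C * (d * m : ℝ) ^ (1 / α)).toNNReal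
    fun f => LipschitzOnWith.of_dist_le' fun X hX Y hY => ?_
  calc dist (f.1 X) (f.1 Y) ≤ anorm α (f.1 X - f.1 Y) := by
        rw [dist_eq_norm]
        exact norm_le_anorm hα _
    _ ≤ C * anorm α (X - Y) := hH f f.2 X hX Y hY
    _ ≤ C * ((d * m : ℝ) ^ (1 / α) * ‖X - Y‖) := by
        gcongr
        exact anorm_le_mul_norm hα _
    _ = C * (d * m : ℝ) ^ (1 / α) * dist X Y := by rw [dist_eq_norm, mul_assoc]

end EntrywiseNorm

section Grid

variable {d L N : ℕ}

/-- The lower corner of the grid cell of side `1 / N` with index `g`. -/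
noncomputable def gridPoint (g : Fin d → Fin L → Fin N) : Fin d → Fin L → ℝ :=
  fun i j => (g i j : ℝ) / N

lemma gridPoint_mem_halfOpenCube (g : Fin d → Fin L → Fin N) :
    gridPoint g ∈ halfOpenCube d L := fun i j => by
  have hN : (0 : ℝ) < N := by exact_mod_cast (g i j).pos
  exact ⟨by unfold gridPoint; positivity, (div_lt_one hN).2 (by exact_mod_cast (g i j).is_lt)⟩

lemma gridPoint_injective :
    Function.Injective (gridPoint : (Fin d → Fin L → Fin N) → Fin d → Fin L → ℝ) := by
  intro g g' h
  ext i j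
  have hN : (N : ℝ) ≠ 0 := by exact_mod_cast (g i j).pos.ne'
  exact_mod_cast (div_left_inj' hN).1 (congrFun₂ h i j)

lemma exists_floor_mul_eq (hN : 0 < N) {X : Fin d → Fin L → ℝ} (hX : X ∈ halfOpenCube d L) :
    ∃ g : Fin d → Fin L → Fin N, ∀ i j, ⌊N * X i j⌋₊ = (g i j : ℕ) := by
  have hN' : (0 : ℝ) < N := by exact_mod_cast hN
  have hlt : ∀ i j, ⌊N * X i j⌋₊ < N := fun i j =>
    (Nat.floor_lt (mul_nonneg hN'.le (hX i j).1)).2 (mul_lt_of_lt_one_right hN' (hX i j).2)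
  exact ⟨fun i j => ⟨_, hlt i j⟩, fun _ _ => rfl⟩

lemma dist_gridPoint_le {X : Fin d → Fin L → ℝ} (hX : ∀ i j, 0 ≤ X i j)
    {g : Fin d → Fin L → Fin N} (hg : ∀ i j, ⌊N * X i j⌋₊ = (g i j : ℕ)) :
    dist (gridPoint g) X ≤ 1 / N := by
  refine (dist_pi_le_iff (by positivity)).2 fun i => (dist_pi_le_iff (by positivity)).2 fun j => ?_
  have hN : (0 : ℝ) < N := by exact_mod_cast (g i j).pos
  have hle : (g i j : ℝ) ≤ N * X i j := hg i j ▸ Nat.floor_le (mul_nonneg hN.le (hX i j))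
  have hlt : N * X i j < g i j + 1 := hg i j ▸ Nat.lt_floor_add_one _
  have hdiff : (g i j : ℝ) / N - X i j = (g i j - N * X i j) / N := by field_simp
  rw [Real.dist_eq, gridPoint, hdiff, abs_div, abs_of_pos hN]
  gcongr
  exact abs_le.2 ⟨by linarith, by linarith⟩

lemma addPE_concat_castAdd {Lp : ℕ} (P : Fin d → Fin Lp → ℝ) (X : Fin d → Fin L → ℝ) (i : Fin d)
    (l : Fin Lp) : addPE (concat P X) i (Fin.castAdd L l) = P i l + (l : ℕ) := by
  simp [addPE, concat]

lemma addPE_concat_natAdd {Lp : ℕ} (P : Fin d → Fin Lp → ℝ) (X : Fin d → Fin L → ℝ) (i : Fin d)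
    (j : Fin L) : addPE (concat P X) i (Fin.natAdd Lp j) = X i j + (Lp + j : ℕ) := by
  simp [addPE, concat]

lemma addPE_concat_inj {Lp : ℕ} {P P' : Fin d → Fin Lp → ℝ} {X X' : Fin d → Fin L → ℝ}
    (h : addPE (concat P X) = addPE (concat P' X')) : P = P' ∧ X = X' := by
  constructor <;> ext i j
  · simpa [addPE_concat_castAdd] using congrFun₂ h i (Fin.castAdd L j)
  · simpa [addPE_concat_natAdd] using congrFun₂ h i (Fin.natAdd Lp j)

lemma eq_of_column_addPE_concat_eq [NeZero d] {p p' : ℝ} (hp : p < 0) (hp' : p' < 0)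
    {X X' : Fin d → Fin L → ℝ} (hX : X ∈ halfOpenCube d L) (hX' : X' ∈ halfOpenCube d L)
    {l l' : Fin (1 + L)} (h : column (addPE (concat (fun _ _ => p) X)) l =
      column (addPE (concat (fun _ _ => p') X')) l') : l = l' := by
  have h0 := congrFun h 0
  induction l using Fin.addCases with
  | left l =>
    induction l' using Fin.addCases with
    | left l' => rw [Subsingleton.elim l l']
    | right j' =>
      simp only [column, addPE_concat_castAdd, addPE_concat_natAdd, Fin.val_eq_zero,
        Nat.cast_zero, add_zero] at h0
      linarith [(hX' 0 j').1, (Nat.cast_nonneg (1 + j' : ℕ) : (0 : ℝ) ≤ _)]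
  | right j =>
    induction l' using Fin.addCases with
    | left l' =>
      simp only [column, addPE_concat_castAdd, addPE_concat_natAdd, Fin.val_eq_zero,
        Nat.cast_zero, add_zero] at h0
      linarith [(hX 0 j).1, (Nat.cast_nonneg (1 + j : ℕ) : (0 : ℝ) ≤ _)]
    | right j' =>
      have hfloor := congrArg Nat.floor h0
      simp only [column, addPE_concat_natAdd, Nat.floor_add_natCast (hX 0 j).1,
        Nat.floor_add_natCast (hX' 0 j').1, Nat.floor_eq_zero.2 (hX 0 j).2,
        Nat.floor_eq_zero.2 (hX' 0 j').2, zero_add] at hfloor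
      exact Fin.ext hfloor

lemma roundDown_column_addPE_concat (hN : 0 < N) {p : ℝ} (hp : p < 0) {X : Fin d → Fin L → ℝ}
    (hX : X ∈ halfOpenCube d L) {g : Fin d → Fin L → Fin N}
    (hg : ∀ i j, ⌊N * X i j⌋₊ = (g i j : ℕ)) (l : Fin (1 + L)) :
    (fun i => roundDown N (N * (1 + L)) (column (addPE (concat (fun _ _ => p) X)) l i)) =
      column (addPE (concat (fun _ _ => p) (gridPoint g))) l := by
  ext i
  induction l using Fin.addCases with
  | left l => simp [column, addPE_concat_castAdd, roundDown_of_neg hp]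
  | right j =>
    simp only [column, addPE_concat_natAdd, gridPoint]
    rw [roundDown_add_natCast hN (by omega) (hX i j), hg]

theorem exists_inTA_eval_grid [NeZero d] (hN : 0 < N) {Θ : Type*} [Finite Θ]
    (T : Θ → (Fin d → Fin L → Fin N) → Fin d → Fin L → ℝ) :
    ∃ τ : (Fin d → Fin (1 + L) → ℝ) → Fin d → Fin (1 + L) → ℝ, InTA τ ∧
      ∀ θ, ∃ P : Fin d → Fin 1 → ℝ, ∀ X ∈ halfOpenCube d L, ∀ g : Fin d → Fin L → Fin N,
        (∀ i j, ⌊N * X i j⌋₊ = (g i j : ℕ)) → lastCols 1 L (τ (concat P X)) = T θ g := by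
  obtain ⟨c, hc⟩ := exists_injective_nat Θ
  let p : Θ → ℝ := fun θ => -(c θ + 1 : ℕ)
  have hp : ∀ θ, p θ < 0 := fun θ => neg_lt_zero.2 (by positivity)
  let Z : Θ × (Fin d → Fin L → Fin N) → Fin d → Fin (1 + L) → ℝ := fun ω =>
    addPE (concat (fun _ _ => p ω.1) (gridPoint ω.2))
  have hposition : ∀ {ω ω' l l'}, column (Z ω) l = column (Z ω') l' → l = l' := fun {ω ω' _ _} =>
    eq_of_column_addPE_concat_eq (hp ω.1) (hp ω'.1) (gridPoint_mem_halfOpenCube _)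
      (gridPoint_mem_halfOpenCube _)
  have hZ : Function.Injective Z := fun ω ω' h => by
    obtain ⟨hP, hX⟩ := addPE_concat_inj h
    have hc' := congrFun₂ hP 0 0
    simp only [p, neg_inj, Nat.cast_inj, Nat.add_right_cancel_iff] at hc'
    exact Prod.ext (hc hc') (gridPoint_injective hX)
  have hrange : Function.Injective fun ω => Set.range (column (Z ω)) := fun ω ω' h => hZ <| by
    ext i l
    have h' : Set.range (column (Z ω)) = Set.range (column (Z ω')) := h
    obtain ⟨l', hl'⟩ := h'.subset (Set.mem_range_self l)
    exact congrFun (hposition hl' ▸ hl').symm i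
  obtain ⟨τ, hτ, hτZ⟩ := exists_inTA_eq_of_column_eq
    (FFRealizable.map_roundDown hN (N * (1 + L))) (fun ω _ _ => hposition) hrange
    fun ω i => Fin.addCases (fun _ => 0) (T ω.1 ω.2 i)
  refine ⟨τ, hτ, fun θ => ⟨fun _ _ => p θ, fun X hX g hg => ?_⟩⟩
  rw [hτZ _ (θ, g) (roundDown_column_addPE_concat hN (hp θ) hX hg)]
  ext i j
  exact Fin.addCases_right (motive := fun _ => ℝ) (left := fun _ => 0) (right := T θ g i) j

end Grid

section Universality

variable {d L : ℕ} {ε : ℝ}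

lemma exists_finite_net_cube {Γ : Type*} [Fintype Γ] (hε : 0 < ε) :
    ∃ Θ : Set (Γ → Fin d → Fin L → ℝ), Θ.Finite ∧
      ∀ V : Γ → Fin d → Fin L → ℝ, (∀ g, V g ∈ cube d L) → ∃ T ∈ Θ, dist T V < ε := by
  obtain ⟨Θ, -, hfin, hcover⟩ :=
    (isCompact_Icc (a := (0 : Γ → Fin d → Fin L → ℝ)) (b := 1)).finite_cover_balls hε
  refine ⟨Θ, hfin, fun V hV => ?_⟩
  simp only [cube_eq_Icc] at hV
  obtain ⟨T, hT, hVT⟩ := Set.mem_iUnion₂.1 (hcover ⟨fun g => (hV g).1, fun g => (hV g).2⟩)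
  exact ⟨T, hT, Metric.mem_ball'.1 hVT⟩

variable [NeZero d] {H : Set ((Fin d → Fin L → ℝ) → Fin d → Fin L → ℝ)}

theorem exists_inTA_forall_dist_le (hε : 0 < ε)
    (hmaps : ∀ f ∈ H, Set.MapsTo f (cube d L) (cube d L))
    (hequi : H.UniformEquicontinuousOn (cube d L)) :
    ∃ τ : (Fin d → Fin (1 + L) → ℝ) → Fin d → Fin (1 + L) → ℝ, InTA τ ∧
      ∀ f ∈ H, ∃ P : Fin d → Fin 1 → ℝ, ∀ X ∈ halfOpenCube d L,
        dist (lastCols 1 L (τ (concat P X))) (f X) ≤ ε := by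
  obtain ⟨δ, hδ, hfδ⟩ := Metric.mem_uniformity_dist.1 <|
    Filter.eventually_inf_principal.1 (hequi _ (Metric.dist_mem_uniformity (half_pos hε)))
  obtain ⟨N, hN⟩ := exists_nat_one_div_lt hδ
  obtain ⟨Θ, hΘ, hnet⟩ :=
    exists_finite_net_cube (d := d) (L := L) (Γ := Fin d → Fin L → Fin (N + 1)) (half_pos hε)
  have := hΘ.to_subtype
  obtain ⟨τ, hτ, hτΘ⟩ := exists_inTA_eval_grid N.succ_pos (Subtype.val : Θ → _)
  refine ⟨τ, hτ, fun f hf => ?_⟩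
  have hgrid : ∀ g : Fin d → Fin L → Fin (N + 1), gridPoint g ∈ cube d L := fun g =>
    halfOpenCube_subset_cube (gridPoint_mem_halfOpenCube g)
  obtain ⟨T, hT, hTf⟩ := hnet (fun g => f (gridPoint g)) fun g => hmaps f hf (hgrid g)
  obtain ⟨P, hP⟩ := hτΘ ⟨T, hT⟩
  refine ⟨P, fun X hX => ?_⟩
  obtain ⟨g, hg⟩ := exists_floor_mul_eq N.succ_pos hX
  have hgX : dist (gridPoint g) X < δ :=
    (dist_gridPoint_le (fun i j => (hX i j).1) hg).trans_lt (by exact_mod_cast hN)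
  calc dist (lastCols 1 L (τ (concat P X))) (f X) = dist (T g) (f X) := by rw [hP X hX g hg]
    _ ≤ dist (T g) (f (gridPoint g)) + dist (f (gridPoint g)) (f X) := dist_triangle _ _ _
    _ ≤ ε / 2 + ε / 2 := add_le_add ((dist_le_pi_dist _ _ g).trans hTf.le)
        (hfδ hgX ⟨hgrid g, halfOpenCube_subset_cube hX⟩ ⟨f, hf⟩).le
    _ = ε := add_halves ε

theorem prompt_tuning_universality_TA_general {α : ℝ} (hα : 0 < α) (hε : 0 < ε)
    (hmaps : ∀ f ∈ H, Set.MapsTo f (cube d L) (cube d L))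
    (hequi : H.UniformEquicontinuousOn (cube d L)) :
    ∃ τ : (Fin d → Fin (1 + L) → ℝ) → Fin d → Fin (1 + L) → ℝ, InTA τ ∧
      ∀ f ∈ H, ∃ P : Fin d → Fin 1 → ℝ,
        (∫ X in cube d L,
            anorm α (lastCols 1 L (τ (concat P X)) - f X) ^ α) ^ (1 / α) ≤ ε := by
  obtain ⟨η, hη, hκη⟩ := exists_pos_mul_lt hε ((d * L : ℝ) ^ (1 / α))
  obtain ⟨τ, hτ, hτH⟩ := exists_inTA_forall_dist_le hη hmaps hequi
  refine ⟨τ, hτ, fun f hf => ?_⟩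
  obtain ⟨P, hP⟩ := hτH f hf
  refine ⟨P, ?_⟩
  rw [← setIntegral_congr_set halfOpenCube_ae_eq_cube]
  refine rpow_setIntegral_rpow_le ((measure_congr halfOpenCube_ae_eq_cube).trans volume_cube) hα
    hε.le (fun X _ => anorm_nonneg _) fun X hX => ?_
  calc anorm α (lastCols 1 L (τ (concat P X)) - f X)
      ≤ (d * L : ℝ) ^ (1 / α) * ‖lastCols 1 L (τ (concat P X)) - f X‖ := anorm_le_mul_norm hα _
    _ ≤ (d * L : ℝ) ^ (1 / α) * η := by
        gcongr
        exact (dist_eq_norm _ _).symm.trans_le (hP X hX)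
    _ ≤ ε := hκη.le

end Universality

/-- universality of prompt tuning for `𝒯_A^{1,1,4}` transformers.  There
exist a prompt length `L_p ≥ 1` and a transformer `τ ∈ 𝒯_A^{1,1,4}` on sequences of
length `L_p + L` such that every `C`-Lipschitz `f : [0,1]^{d×L} → [0,1]^{d×L}` is
`ε`-approximated in `d_α` by `τ([P, ·])_{:,L_p:}` for some prompt `P ∈ ℝ^{d×L_p}`. -/
theorem prompt_tuning_universality_TA (d L : ℕ) (hd : 1 ≤ d) (hL : 1 ≤ L)
    (α C ε : ℝ) (hα : 1 ≤ α) (hC : 0 < C) (hε : 0 < ε) :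
    ∃ Lp : ℕ, 1 ≤ Lp ∧
      ∃ τ : (Fin d → Fin (Lp + L) → ℝ) → Fin d → Fin (Lp + L) → ℝ,
        InTA τ ∧
        ∀ f : (Fin d → Fin L → ℝ) → Fin d → Fin L → ℝ,
          (∀ X ∈ cube d L, f X ∈ cube d L) →
          (∀ X ∈ cube d L, ∀ Y ∈ cube d L, anorm α (f X - f Y) ≤ C * anorm α (X - Y)) →
          ∃ P : Fin d → Fin Lp → ℝ,
            (∫ X in cube d L,
                anorm α (lastCols Lp L (τ (concat P X)) - f X) ^ α) ^ (1 / α) ≤ ε := by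
  have := NeZero.of_pos (Nat.succ_le_iff.1 hd)
  have hα0 : 0 < α := zero_lt_one.trans_le hα
  obtain ⟨τ, hτ, hτf⟩ := prompt_tuning_universality_TA_general hα0 hε
    (H := {f | Set.MapsTo f (cube d L) (cube d L) ∧
      ∀ X ∈ cube d L, ∀ Y ∈ cube d L, anorm α (f X - f Y) ≤ C * anorm α (X - Y)})
    (fun f hf => hf.1) (uniformEquicontinuousOn_of_anorm_sub_le hα0 hC.le fun f hf => hf.2)
  exact ⟨1, le_rfl, τ, hτ, fun f hf hLip => hτf f ⟨fun X => hf X, hLip⟩⟩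
end
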